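/- arXiv:1604.04809 — 2 statements merged into one kernel-verified Lean document; each statement's English description precedes it below -/
import Mathlib

section
/- Let N be a weighted open chain of cycles C_1,…,C_m without bonuses, where for each j ∈ {1,…,m−1} the shared node 1^j has two incoming edges: the edge n^j → 1^j of weight w_1^j (within C_j) and the edge (k−1)^{j+1} → 1^j of weight w_2^j (within C_{j+1}). If w_1^j > w_2^j for all j ∈ {1,…,m−1}, then the coordination game on N is weakly acyclic. -/
/-!
Call the edges `node j (n - 1) → node j 0` back edges and all other edges tree edges. The tree
edges form an arborescence rooted at the first node of the last cycle: a shared node gets its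
parent from the later cycle. Every back edge enters a node from one of its descendants, and it
outweighs the tree edge into that node, if there is one.

For such a graph, settle the nodes one by one, children before parents. When an unsettled node
switches to the colour `c` of its back or tree predecessor, let `c` spread down the tree as long
as it is profitable. A settled node that matches its back predecessor ignores the wave: its
descendants, and among them the back predecessor, can only be reached through the node itself. A
node that joins the wave did not match its back predecessor and could not profitably have done so;
since that predecessor either keeps its colour or turns to `c`, the node is settled again.
-/

open scoped Classical

namespace CG

/-- Payoff of node `i` in a coordination game on a weighted directed graph
with adjacency `adj` (an edge `j → i` is `adj j i`), edge weights `w`,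
bonuses `β`, under the joint strategy `s`. -/
noncomputable def payoff {V M : Type} [Fintype V] (adj : V → V → Prop)
    (w : V → V → ℝ) (β : V → M → ℕ) (s : V → M) (i : V) : ℝ :=
  (∑ j ∈ Finset.univ.filter (fun j => adj j i ∧ s j = s i), w j i) + (β i (s i) : ℝ)

/-- A joint strategy assigns to every node a colour from its colour set. -/
def Valid {V M : Type} (C : V → Finset M) (s : V → M) : Prop :=
  ∀ i, s i ∈ C i

/-- `s'` is a profitable deviation of the (non-empty) coalition
`K = {i | s i ≠ s' i}` from `s`. -/
def ProfDev {V M : Type} [Fintype V] (adj : V → V → Prop) (w : V → V → ℝ)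
    (β : V → M → ℕ) (C : V → Finset M) (s s' : V → M) : Prop :=
  Valid C s' ∧ s ≠ s' ∧
    ∀ i, s i ≠ s' i → payoff adj w β s i < payoff adj w β s' i

/-- A profitable deviation of a single player. -/
def UniDev {V M : Type} [Fintype V] (adj : V → V → Prop) (w : V → V → ℝ)
    (β : V → M → ℕ) (C : V → Finset M) (s s' : V → M) : Prop :=
  ProfDev adj w β C s s' ∧ ∃ i, ∀ j, j ≠ i → s j = s' j

/-- A Nash equilibrium: no single player has a profitable deviation. -/
def IsNash {V M : Type} [Fintype V] (adj : V → V → Prop) (w : V → V → ℝ)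
    (β : V → M → ℕ) (C : V → Finset M) (s : V → M) : Prop :=
  Valid C s ∧ ∀ s', ¬ UniDev adj w β C s s'

/-- A strong equilibrium: no coalition has a profitable deviation. -/
def IsStrong {V M : Type} [Fintype V] (adj : V → V → Prop) (w : V → V → ℝ)
    (β : V → M → ℕ) (C : V → Finset M) (s : V → M) : Prop :=
  Valid C s ∧ ∀ s', ¬ ProfDev adj w β C s s'

/-- There is a finite improvement path of length `L` starting at `s`
(each step a profitable single-player deviation) ending in a Nash equilibrium. -/
def ImpPath {V M : Type} [Fintype V] (adj : V → V → Prop) (w : V → V → ℝ)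
    (β : V → M → ℕ) (C : V → Finset M) (s : V → M) (L : ℕ) : Prop :=
  ∃ σ : ℕ → V → M, σ 0 = s ∧
    (∀ t, t < L → UniDev adj w β C (σ t) (σ (t + 1))) ∧
    IsNash adj w β C (σ L)

/-- There is a finite c-improvement path of length `L` starting at `s`
(each step a profitable coalition deviation) ending in a strong equilibrium. -/
def CImpPath {V M : Type} [Fintype V] (adj : V → V → Prop) (w : V → V → ℝ)
    (β : V → M → ℕ) (C : V → Finset M) (s : V → M) (L : ℕ) : Prop :=
  ∃ σ : ℕ → V → M, σ 0 = s ∧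
    (∀ t, t < L → ProfDev adj w β C (σ t) (σ (t + 1))) ∧
    IsStrong adj w β C (σ L)

/-- Adjacency of the simple cycle `1 → 2 → ⋯ → n → 1` on `Fin n`. -/
def cycAdj (n : ℕ) : Fin n → Fin n → Prop :=
  fun i j => (i.val + 1) % n = j.val

/-- Adjacency of a chain of `m` cycles, each of `n` nodes: `node j i` is the
`(i+1)`-st node of the `(j+1)`-st cycle (`0`-based indices). -/
def chainAdj {V : Type} (m n : ℕ) (node : ℕ → ℕ → V) : V → V → Prop :=
  fun u v => ∃ j i, j < m ∧ i < n ∧ u = node j i ∧ v = node j ((i + 1) % n)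

/-- `node`, `k` describe an open chain of `m ≥ 2` simple cycles, each on `n ≥ 3`
nodes, where consecutive cycles `C_j, C_{j+1}` share exactly the node
`node j 0 = node (j+1) (k j)` (with `1 ≤ k j < n`) and the cycles are
otherwise pairwise disjoint, and every vertex lies on some cycle. -/
def IsOpenChain {V : Type} (m n : ℕ) (node : ℕ → ℕ → V) (k : ℕ → ℕ) : Prop :=
  2 ≤ m ∧ 3 ≤ n ∧
  (∀ j, j + 1 < m → 1 ≤ k j ∧ k j < n) ∧
  (∀ j, j + 1 < m → node j 0 = node (j + 1) (k j)) ∧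
  (∀ j i j' i', j < m → i < n → j' < m → i' < n → node j i = node j' i' →
      (j = j' ∧ i = i') ∨ (j' = j + 1 ∧ i = 0 ∧ i' = k j) ∨
      (j = j' + 1 ∧ i' = 0 ∧ i = k j')) ∧
  (∀ v : V, ∃ j i, j < m ∧ i < n ∧ node j i = v)

/-- As `IsOpenChain`, but additionally the last cycle shares exactly the node
`node (m-1) 0 = node 0 (k (m-1))` with the first one. -/
def IsClosedChain {V : Type} (m n : ℕ) (node : ℕ → ℕ → V) (k : ℕ → ℕ) : Prop :=
  2 ≤ m ∧ 3 ≤ n ∧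
  (∀ j, j < m → 1 ≤ k j ∧ k j < n) ∧
  (∀ j, j + 1 < m → node j 0 = node (j + 1) (k j)) ∧
  node (m - 1) 0 = node 0 (k (m - 1)) ∧
  (∀ j i j' i', j < m → i < n → j' < m → i' < n → node j i = node j' i' →
      (j = j' ∧ i = i') ∨ (j' = j + 1 ∧ i = 0 ∧ i' = k j) ∨
      (j = j' + 1 ∧ i' = 0 ∧ i = k j') ∨
      (j = m - 1 ∧ j' = 0 ∧ i = 0 ∧ i' = k (m - 1)) ∨
      (j' = m - 1 ∧ j = 0 ∧ i' = 0 ∧ i = k (m - 1))) ∧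
  (∀ v : V, ∃ j i, j < m ∧ i < n ∧ node j i = v)

section Games

variable {V M : Type} [Fintype V] {adj : V → V → Prop} {w : V → V → ℝ} {β : V → M → ℕ}
  {C : V → Finset M} {s t : V → M} {u v : V} {c : M}

/-- `t` can be reached from `s` by finitely many profitable deviations of single players. -/
abbrev ImprovesTo (adj : V → V → Prop) (w : V → V → ℝ) (β : V → M → ℕ) (C : V → Finset M) :
    (V → M) → (V → M) → Prop :=
  Relation.ReflTransGen (UniDev adj w β C)

theorem ImprovesTo.valid (h : ImprovesTo adj w β C s t) (hs : Valid C s) : Valid C t := by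
  rcases h.cases_tail with rfl | ⟨_, -, hdev⟩
  exacts [hs, hdev.1.1]

theorem ImprovesTo.exists_impPath (h : ImprovesTo adj w β C s t) (ht : IsNash adj w β C t) :
    ∃ L, ImpPath adj w β C s L := by
  induction h using Relation.ReflTransGen.head_induction_on with
  | refl => exact ⟨0, fun _ => t, rfl, fun _ h => absurd h (Nat.not_lt_zero _), ht⟩
  | @head s s' hdev _ ih =>
    obtain ⟨L, σ, rfl, hstep, hnash⟩ := ih
    refine ⟨L + 1, fun i => Nat.casesOn i s σ, rfl, ?_, hnash⟩
    rintro (_ | i) hi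
    exacts [hdev, hstep i (Nat.lt_of_succ_lt_succ hi)]

theorem uniDev_update (hs : Valid C s) (hc : c ∈ C v)
    (hlt : payoff adj w β s v < payoff adj w β (Function.update s v c) v) :
    UniDev adj w β C s (Function.update s v c) := by
  refine ⟨⟨fun u => ?_, fun h => ?_, fun u hu => ?_⟩,
    v, fun u hu => (Function.update_of_ne hu _ _).symm⟩
  · obtain rfl | h := eq_or_ne u v
    · rwa [Function.update_self]
    · rw [Function.update_of_ne h]
      exact hs u
  · rw [← h] at hlt
    exact hlt.false
  · obtain rfl | h := eq_or_ne u v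
    · exact hlt
    · exact absurd (Function.update_of_ne h _ _).symm hu

theorem isNash_of_update_le (hs : Valid C s)
    (hle : ∀ v, ∀ c ∈ C v, c ≠ s v →
      payoff adj w β (Function.update s v c) v ≤ payoff adj w β s v) :
    IsNash adj w β C s := by
  refine ⟨hs, ?_⟩
  rintro s' ⟨⟨hvalid, hne, hlt⟩, v, hoff⟩
  have hupdate : s' = Function.update s v (s' v) :=
    Function.eq_update_iff.2 ⟨rfl, fun u hu => (hoff u hu).symm⟩
  have hv : s v ≠ s' v := fun h => hne (by rw [hupdate, ← h, Function.update_eq_self])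
  have hle_v := hle v (s' v) (hvalid v) hv.symm
  rw [← hupdate] at hle_v
  exact (hlt v hv).not_ge hle_v

/-- The total weight of the edges into `v` from nodes coloured `c`: what `v` earns, bonuses aside,
by playing `c` against `s`. -/
noncomputable def gain (adj : V → V → Prop) (w : V → V → ℝ) (s : V → M) (v : V) (c : M) : ℝ :=
  ∑ u ∈ Finset.univ.filter (fun u => adj u v ∧ s u = c), w u v

theorem payoff_eq_gain (s : V → M) (v : V) :
    payoff adj w β s v = gain adj w s v (s v) + β v (s v) :=
  rfl

theorem payoff_update_eq_gain (hloop : ¬ adj v v) (s : V → M) (c : M) :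
    payoff adj w β (Function.update s v c) v = gain adj w s v c + β v c := by
  have hfilter : ∀ u, adj u v ∧ Function.update s v c u = c ↔ adj u v ∧ s u = c := by
    intro u
    refine and_congr_right fun hu => ?_
    have huv : u ≠ v := fun h => hloop (h ▸ hu)
    rw [Function.update_of_ne huv]
  simp only [payoff_eq_gain, gain, Function.update_self, hfilter]

theorem gain_nonneg (hw : ∀ u v, adj u v → 0 ≤ w u v) (s : V → M) (v : V) (c : M) :
    0 ≤ gain adj w s v c :=
  Finset.sum_nonneg fun u hu => hw u v (Finset.mem_filter.1 hu).2.1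

theorem gain_nonpos (h : ∀ u, adj u v → s u = c → w u v ≤ 0) : gain adj w s v c ≤ 0 :=
  Finset.sum_nonpos fun u hu =>
    h u (Finset.mem_filter.1 hu).2.1 (Finset.mem_filter.1 hu).2.2

theorem weight_le_gain (hw : ∀ u v, adj u v → 0 ≤ w u v) (hu : adj u v) (s : V → M) :
    w u v ≤ gain adj w s v (s u) :=
  Finset.single_le_sum (f := fun u => w u v)
    (fun x hx => hw x v (Finset.mem_filter.1 hx).2.1)
    (Finset.mem_filter.2 ⟨Finset.mem_univ u, hu, rfl⟩)

theorem gain_le_weight (hu : 0 ≤ w u v) (h : ∀ x, adj x v → s x = c → x = u) :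
    gain adj w s v c ≤ w u v := by
  have hsub : Finset.univ.filter (fun x => adj x v ∧ s x = c) ⊆ {u} := fun x hx =>
    Finset.mem_singleton.2 (h x (Finset.mem_filter.1 hx).2.1 (Finset.mem_filter.1 hx).2.2)
  calc gain adj w s v c ≤ ∑ x ∈ {u}, w x v :=
        Finset.sum_le_sum_of_subset_of_nonneg hsub fun x hx _ => by
          rwa [Finset.mem_singleton.1 hx]
    _ = w u v := Finset.sum_singleton _ _

end Games

/-- A weighted graph whose edges split into the edges of a forest, directed from `parent` to child,
and `back` edges into a node from one of its descendants. Every node receives at most one back edge,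
and this edge outweighs the tree edge into the node. -/
structure IsHeavyBackForest {V : Type} (adj parent back : V → V → Prop) (w : V → V → ℝ) :
    Prop where
  adj_iff : ∀ u v, adj u v ↔ parent u v ∨ back u v
  parent_unique : ∀ p p' v, parent p v → parent p' v → p = p'
  back_unique : ∀ b b' v, back b v → back b' v → b = b'
  acyclic : ∀ v, ¬ Relation.TransGen parent v v
  back_descendant : ∀ b v, back b v → Relation.TransGen parent v b
  weight_nonneg : ∀ u v, adj u v → 0 ≤ w u v
  weight_lt : ∀ p b v, parent p v → back b v → w p v < w b v

/-- The node `v` could play the colour of `u`, does not do so, and would be rewarded for it. -/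
def Attracts {V M : Type} (w : V → V → ℝ) (C : V → Finset M) (s : V → M) (u v : V) : Prop :=
  s u ≠ s v ∧ s u ∈ C v ∧ 0 < w u v

/-- The local form of optimality in an `IsHeavyBackForest`: `v` follows its back predecessor if that
is worthwhile, and its parent otherwise. -/
structure Settled {V M : Type} (parent back : V → V → Prop) (w : V → V → ℝ) (C : V → Finset M)
    (s : V → M) (v : V) : Prop where
  not_attracts_back : ∀ b, back b v → ¬ Attracts w C s b v
  exists_back_eq : ∀ p, parent p v → Attracts w C s p v → ∃ b, back b v ∧ s b = s v

section BackForest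

variable {V M : Type} {adj parent back : V → V → Prop} {w : V → V → ℝ}
  {C : V → Finset M} {s t : V → M} {v p b r : V} {c : M} {S D : Set V}

theorem exists_attracts_of_not_settled (h : ¬ Settled parent back w C s v) :
    (∃ b, back b v ∧ Attracts w C s b v) ∨
      ∃ p, parent p v ∧ Attracts w C s p v ∧ ∀ b, back b v → s b ≠ s v := by
  by_contra! hno
  exact h ⟨hno.1, hno.2⟩

theorem settled_of_parent_eq (hback : ∀ b, back b v → ¬ Attracts w C s b v)
    (hne : ∀ b, back b v → s b ≠ s v) (hb : ∀ b, back b v → t b = s b ∨ t b = t v)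
    (hp : ∀ p, parent p v → t p = t v) : Settled parent back w C t v where
  not_attracts_back b hbv hatt := by
    have hkeep : t b = s b := (hb b hbv).resolve_right hatt.1
    exact hback b hbv ⟨hne b hbv, hkeep ▸ hatt.2.1, hatt.2.2⟩
  exists_back_eq p hpv hatt := absurd (hp p hpv) hatt.1

namespace IsHeavyBackForest

variable (hG : IsHeavyBackForest adj parent back w)
include hG

theorem adj_of_parent (h : parent p v) : adj p v :=
  (hG.adj_iff p v).2 (Or.inl h)

theorem adj_of_back (h : back b v) : adj b v :=
  (hG.adj_iff b v).2 (Or.inr h)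

theorem not_adj_self (v : V) : ¬ adj v v := by
  rw [hG.adj_iff]
  rintro (h | h)
  exacts [hG.acyclic v (.single h), hG.acyclic v (hG.back_descendant v v h)]

theorem settled_of_back_eq (hb : back b v) (h : s b = s v) : Settled parent back w C s v where
  not_attracts_back b' hb' hatt := hatt.1 (hG.back_unique b b' v hb hb' ▸ h)
  exists_back_eq _ _ _ := ⟨b, hb, h⟩

theorem exists_mem_compl_forall_child_mem [Finite V] (hS : S ≠ Set.univ) :
    ∃ r ∉ S, ∀ v, parent r v → v ∈ S := by
  have : Std.Irrefl (Relation.TransGen parent) := ⟨hG.acyclic⟩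
  obtain ⟨r, hr, hmax⟩ := (Finite.wellFounded_of_trans_of_irrefl
    (Function.swap (Relation.TransGen parent))).has_min Sᶜ (Set.nonempty_compl.2 hS)
  exact ⟨r, hr, fun v hv => by_contra fun hvS => hmax v hvS (.single hv)⟩

variable [Fintype V]

theorem gain_lt_back_or_nonpos (hb : back b v) (hne : s b ≠ c) :
    gain adj w s v c < w b v ∨ gain adj w s v c ≤ 0 := by
  have parent_of_match : ∀ u, adj u v → s u = c → parent u v := fun u hu hc =>
    ((hG.adj_iff u v).1 hu).resolve_right fun hu => hne (hG.back_unique u b v hu hb ▸ hc)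
  by_cases hp : ∃ p, parent p v
  · obtain ⟨p, hp⟩ := hp
    have hle : gain adj w s v c ≤ w p v :=
      gain_le_weight (hG.weight_nonneg p v (hG.adj_of_parent hp)) fun u hu hc =>
        hG.parent_unique u p v (parent_of_match u hu hc) hp
    exact Or.inl (hle.trans_lt (hG.weight_lt p b v hp hb))
  · exact Or.inr (gain_nonpos fun u hu hc => absurd ⟨u, parent_of_match u hu hc⟩ hp)

theorem uniDev_of_gain_lt (hs : Valid C s) (hc : c ∈ C v)
    (hlt : gain adj w s v (s v) < gain adj w s v c) :
    UniDev adj w (fun _ _ => 0) C s (Function.update s v c) := by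
  apply uniDev_update hs hc
  rwa [payoff_eq_gain, payoff_update_eq_gain (hG.not_adj_self v), add_lt_add_iff_right]

theorem uniDev_of_attracts_back (hs : Valid C s) (hb : back b v) (hatt : Attracts w C s b v) :
    UniDev adj w (fun _ _ => 0) C s (Function.update s v (s b)) := by
  obtain ⟨hne, hmem, hpos⟩ := hatt
  have hlt : gain adj w s v (s v) < w b v :=
    (hG.gain_lt_back_or_nonpos hb hne).elim id fun h => h.trans_lt hpos
  exact hG.uniDev_of_gain_lt hs hmem
    (hlt.trans_le (weight_le_gain hG.weight_nonneg (hG.adj_of_back hb) s))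

theorem uniDev_of_attracts_parent (hs : Valid C s) (hp : parent p v) (hatt : Attracts w C s p v)
    (hback : ∀ b, back b v → s b ≠ s v) :
    UniDev adj w (fun _ _ => 0) C s (Function.update s v (s p)) := by
  obtain ⟨hne, hmem, hpos⟩ := hatt
  have hzero : gain adj w s v (s v) ≤ 0 := gain_nonpos fun u hu huv => by
    rcases (hG.adj_iff u v).1 hu with hu | hu
    · exact absurd (hG.parent_unique u p v hu hp ▸ huv) hne
    · exact absurd huv (hback u hu)
  exact hG.uniDev_of_gain_lt hs hmem
    ((hzero.trans_lt hpos).trans_le (weight_le_gain hG.weight_nonneg (hG.adj_of_parent hp) s))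

theorem gain_le_of_settled (hv : Settled parent back w C s v) (hc : c ∈ C v) (hne : c ≠ s v) :
    gain adj w s v c ≤ gain adj w s v (s v) := by
  by_cases hmatch : ∃ b, back b v ∧ s b = s v
  · obtain ⟨b, hb, hbv⟩ := hmatch
    have hadj := hG.adj_of_back hb
    calc gain adj w s v c ≤ w b v :=
          (hG.gain_lt_back_or_nonpos hb (hbv.trans_ne hne.symm)).elim le_of_lt
            fun h => h.trans (hG.weight_nonneg b v hadj)
      _ ≤ gain adj w s v (s v) := hbv ▸ weight_le_gain hG.weight_nonneg hadj s
  · have not_attracts : ∀ u, adj u v → ¬ Attracts w C s u v := fun u hu =>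
      ((hG.adj_iff u v).1 hu).elim (fun hp hatt => hmatch (hv.exists_back_eq u hp hatt))
        (hv.not_attracts_back u)
    have hzero : gain adj w s v c ≤ 0 := gain_nonpos fun u hu huc =>
      not_lt.1 fun hpos => not_attracts u hu ⟨huc.trans_ne hne, huc ▸ hc, hpos⟩
    exact hzero.trans (gain_nonneg hG.weight_nonneg s v (s v))

theorem isNash_of_forall_settled (hs : Valid C s) (h : ∀ v, Settled parent back w C s v) :
    IsNash adj w (fun _ _ => 0) C s := by
  refine isNash_of_update_le hs fun v c hc hne => ?_
  rw [payoff_update_eq_gain (hG.not_adj_self v), payoff_eq_gain, add_le_add_iff_right]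
  exact hG.gain_le_of_settled (h v) hc hne

end IsHeavyBackForest

theorem piecewise_const_eq_or_eq (D : Set V) (s : V → M) (c : M) (v : V) :
    D.piecewise (fun _ => c) s v = s v ∨ D.piecewise (fun _ => c) s v = c :=
  (ite_eq_or_eq (v ∈ D) c (s v)).symm

/-- `D` is the set of nodes reached so far by a wave of colour `c` that starts at `r` in the joint
strategy `s` and spreads along tree edges through nodes that do not match their back predecessor. -/
structure IsWave [Fintype V] (adj parent back : V → V → Prop) (w : V → V → ℝ) (C : V → Finset M)
    (s : V → M) (r : V) (c : M) (D : Set V) : Prop where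
  root_mem : r ∈ D
  parent_mem : ∀ v ∈ D, v ≠ r → ∃ p ∈ D, parent p v
  back_ne : ∀ v ∈ D, v ≠ r → ∀ b, back b v → s b ≠ s v
  improvesTo : ImprovesTo adj w (fun _ _ => 0) C s (D.piecewise (fun _ => c) s)

namespace IsWave

variable [Fintype V]

theorem singleton (hdev : UniDev adj w (fun _ _ => 0) C s (Function.update s r c)) :
    IsWave adj parent back w C s r c {r} where
  root_mem := rfl
  parent_mem _ hv hvr := absurd hv hvr
  back_ne _ hv hvr := absurd hv hvr
  improvesTo := by
    rw [Set.piecewise_singleton]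
    exact .single hdev

variable (hG : IsHeavyBackForest adj parent back w)
  (hD : IsWave adj parent back w C s r c D)
include hG hD

theorem settled_of_mem (hset : Settled parent back w C s v) (hvr : v ≠ r) (hvD : v ∈ D) :
    Settled parent back w C (D.piecewise (fun _ => c) s) v := by
  have hvc : D.piecewise (fun _ => c) s v = c := D.piecewise_eq_of_mem _ _ hvD
  refine settled_of_parent_eq hset.not_attracts_back (hD.back_ne v hvD hvr)
    (fun b _ => hvc.symm ▸ piecewise_const_eq_or_eq D s c b) fun p hp => ?_
  obtain ⟨q, hq, hqv⟩ := hD.parent_mem v hvD hvr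
  rw [hvc, hG.parent_unique p q v hp hqv, D.piecewise_eq_of_mem _ _ hq]

variable (hclosed : ∀ u v, parent u v → u ∈ S → v ∈ S) (hr : r ∉ S)
include hclosed hr

theorem mem_of_back_mem (hb : back b v) (hv : v ∈ S) (hbD : b ∈ D) : v ∈ D := by
  have hpath := (hG.back_descendant b v hb).to_reflTransGen
  clear hb
  induction hpath using Relation.ReflTransGen.head_induction_on with
  | refl => exact hbD
  | @head v u hvu _ ih =>
    have hu : u ∈ S := hclosed v u hvu hv
    obtain ⟨p, hp, hpu⟩ := hD.parent_mem u (ih hu) (ne_of_mem_of_not_mem hu hr)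
    exact hG.parent_unique p v u hpu hvu ▸ hp

theorem piecewise_back_eq (hb : back b v) (hv : v ∈ S) (hvD : v ∉ D) :
    D.piecewise (fun _ => c) s b = s b :=
  D.piecewise_eq_of_notMem _ _ (mt (hD.mem_of_back_mem hG hclosed hr hb hv) hvD)

theorem insert_of_attracts (hs : Valid C s) (hv : v ∈ S) (hvD : v ∉ D) (hpD : p ∈ D)
    (hp : parent p v) (hatt : Attracts w C (D.piecewise (fun _ => c) s) p v)
    (hback : ∀ b, back b v → s b ≠ s v) :
    IsWave adj parent back w C s r c (insert v D) where
  root_mem := Or.inr hD.root_mem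
  parent_mem := by
    rintro u (rfl | hu) hur
    · exact ⟨p, Or.inr hpD, hp⟩
    · obtain ⟨q, hq, hqu⟩ := hD.parent_mem u hu hur
      exact ⟨q, Or.inr hq, hqu⟩
  back_ne := by
    rintro u (rfl | hu) hur
    exacts [hback, hD.back_ne u hu hur]
  improvesTo := by
    have hdev := hG.uniDev_of_attracts_parent (hD.improvesTo.valid hs) hp hatt fun b hb => by
      rw [hD.piecewise_back_eq hG hclosed hr hb hv hvD, D.piecewise_eq_of_notMem _ _ hvD]
      exact hback b hb
    rw [D.piecewise_eq_of_mem _ _ hpD] at hdev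
    rw [Set.piecewise_insert]
    exact hD.improvesTo.tail hdev

end IsWave

theorem IsWave.settled_of_maximal [Fintype V] (hG : IsHeavyBackForest adj parent back w)
    (hclosed : ∀ u v, parent u v → u ∈ S → v ∈ S) (hr : r ∉ S)
    (hD : Maximal (IsWave adj parent back w C s r c) D) (hs : Valid C s)
    (hset : ∀ v ∈ S, Settled parent back w C s v) (hv : v ∈ S) :
    Settled parent back w C (D.piecewise (fun _ => c) s) v := by
  by_cases hvD : v ∈ D
  · exact hD.prop.settled_of_mem hG (hset v hv) (ne_of_mem_of_not_mem hv hr) hvD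
  have hv_eq : D.piecewise (fun _ => c) s v = s v := D.piecewise_eq_of_notMem _ _ hvD
  have hb_eq := fun b hb => hD.prop.piecewise_back_eq hG hclosed hr (b := b) hb hv hvD
  have attracts_of_eq : ∀ u, D.piecewise (fun _ => c) s u = s u →
      Attracts w C (D.piecewise (fun _ => c) s) u v → Attracts w C s u v := by
    intro u hu hatt
    rwa [Attracts, hu, hv_eq] at hatt
  by_contra hnot
  rcases exists_attracts_of_not_settled hnot with ⟨b, hb, hatt⟩ | ⟨p, hp, hatt, hback⟩
  · exact (hset v hv).not_attracts_back b hb (attracts_of_eq b (hb_eq b hb) hatt)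
  have hback_s : ∀ b, back b v → s b ≠ s v := fun b hb => by
    rw [← hv_eq, ← hb_eq b hb]
    exact hback b hb
  have hpD : p ∈ D := by
    by_contra hpD
    obtain ⟨b, hb, hbv⟩ := (hset v hv).exists_back_eq p hp
      (attracts_of_eq p (D.piecewise_eq_of_notMem _ _ hpD) hatt)
    exact hback_s b hb hbv
  exact hvD (hD.le_of_ge (hD.prop.insert_of_attracts hG hclosed hr hs hv hvD hpD hp hatt hback_s)
    (Set.subset_insert v D) (Set.mem_insert v D))

theorem IsHeavyBackForest.exists_wave [Fintype V] (hG : IsHeavyBackForest adj parent back w)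
    (hclosed : ∀ u v, parent u v → u ∈ S → v ∈ S) (hr : r ∉ S) (hs : Valid C s)
    (hset : ∀ v ∈ S, Settled parent back w C s v)
    (hdev : UniDev adj w (fun _ _ => 0) C s (Function.update s r c)) :
    ∃ t, ImprovesTo adj w (fun _ _ => 0) C s t ∧ t r = c ∧ (∀ v, t v = s v ∨ t v = c) ∧
      ∀ v ∈ S, Settled parent back w C t v := by
  obtain ⟨D, -, hD⟩ := Finite.exists_le_maximal (IsWave.singleton (parent := parent)
    (back := back) hdev)
  exact ⟨D.piecewise (fun _ => c) s, hD.prop.improvesTo,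
    D.piecewise_eq_of_mem _ _ hD.prop.root_mem, piecewise_const_eq_or_eq D s c,
    fun v hv => IsWave.settled_of_maximal hG hclosed hr hD hs hset hv⟩

theorem IsHeavyBackForest.exists_settle_insert [Fintype V]
    (hG : IsHeavyBackForest adj parent back w)
    (hclosed : ∀ u v, parent u v → u ∈ S → v ∈ S) (hr : r ∉ S) (hs : Valid C s)
    (hset : ∀ v ∈ S, Settled parent back w C s v) :
    ∃ t, ImprovesTo adj w (fun _ _ => 0) C s t ∧
      ∀ v ∈ insert r S, Settled parent back w C t v := by
  suffices h : ∃ t, ImprovesTo adj w (fun _ _ => 0) C s t ∧ Settled parent back w C t r ∧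
      ∀ v ∈ S, Settled parent back w C t v by
    obtain ⟨t, hst, hrt, hSt⟩ := h
    exact ⟨t, hst, Set.forall_mem_insert.2 ⟨hrt, hSt⟩⟩
  by_cases hrs : Settled parent back w C s r
  · exact ⟨s, .refl, hrs, hset⟩
  by_cases hback : ∃ b, back b r ∧ Attracts w C s b r
  · obtain ⟨b, hb, hatt⟩ := hback
    obtain ⟨t, hst, htr, htc, hSt⟩ :=
      hG.exists_wave hclosed hr hs hset (hG.uniDev_of_attracts_back hs hb hatt)
    have hbr : t b = t r := ((htc b).elim id id).trans htr.symm
    exact ⟨t, hst, hG.settled_of_back_eq hb hbr, hSt⟩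
  · obtain ⟨p, hp, hatt, hne⟩ := (exists_attracts_of_not_settled hrs).resolve_left hback
    obtain ⟨t, hst, htr, htc, hSt⟩ :=
      hG.exists_wave hclosed hr hs hset (hG.uniDev_of_attracts_parent hs hp hatt hne)
    refine ⟨t, hst, settled_of_parent_eq (fun b hb hatt => hback ⟨b, hb, hatt⟩) hne
      (fun b _ => htr ▸ htc b) fun q hq => ?_, hSt⟩
    rw [hG.parent_unique q p r hq hp, htr]
    exact (htc p).elim id id

theorem IsHeavyBackForest.exists_settle_all [Fintype V]
    (hG : IsHeavyBackForest adj parent back w) (hs : Valid C s) :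
    ∃ t, ImprovesTo adj w (fun _ _ => 0) C s t ∧ ∀ v, Settled parent back w C t v := by
  let CanSettle (S : Set V) : Prop := (∀ u v, parent u v → u ∈ S → v ∈ S) ∧
    ∃ t, ImprovesTo adj w (fun _ _ => 0) C s t ∧ ∀ v ∈ S, Settled parent back w C t v
  have hempty : CanSettle ∅ := ⟨fun _ _ _ h => h, s, .refl, fun _ h => h.elim⟩
  obtain ⟨S, -, hS⟩ := Finite.exists_le_maximal hempty
  obtain ⟨hclosed, t, hst, hset⟩ := hS.prop
  suffices huniv : S = Set.univ from ⟨t, hst, fun v => hset v (huniv ▸ Set.mem_univ v)⟩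
  by_contra hne
  obtain ⟨r, hr, hchild⟩ := hG.exists_mem_compl_forall_child_mem hne
  obtain ⟨t', htt', hset'⟩ := hG.exists_settle_insert hclosed hr (hst.valid hs) hset
  have hinsert : CanSettle (insert r S) := by
    refine ⟨?_, t', hst.trans htt', hset'⟩
    rintro u v huv (rfl | hu)
    exacts [Or.inr (hchild v huv), Or.inr (hclosed u v huv hu)]
  exact hr (hS.le_of_ge hinsert (Set.subset_insert r S) (Set.mem_insert r S))

end BackForest

theorem weighted_open_chain_w1_gt_w2_weakly_acyclic_general
    {V : Type} [Fintype V] {M : Type} {adj parent back : V → V → Prop} {w : V → V → ℝ}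
    (hG : IsHeavyBackForest adj parent back w) (C : V → Finset M) :
    ∀ s : V → M, Valid C s → ∃ L, ImpPath adj w (fun _ _ => 0) C s L := by
  intro s hs
  obtain ⟨t, hst, hset⟩ := hG.exists_settle_all hs
  exact hst.exists_impPath (hG.isNash_of_forall_settled (hst.valid hs) hset)

section OpenChain

variable {V : Type} {m n : ℕ} {node : ℕ → ℕ → V} {k : ℕ → ℕ} {j j' a a' : ℕ} {u v : V}

/-- The tree edges of a chain of cycles: all edges except those that close a cycle. -/
def chainParent (m n : ℕ) (node : ℕ → ℕ → V) (u v : V) : Prop :=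
  ∃ j a, j < m ∧ a + 1 < n ∧ u = node j a ∧ v = node j (a + 1)

/-- The edges `n^j → 1^j` that close the cycles of a chain. -/
def chainBack (m n : ℕ) (node : ℕ → ℕ → V) (u v : V) : Prop :=
  ∃ j, j < m ∧ u = node j (n - 1) ∧ v = node j 0

theorem chainAdj_iff (hn : 0 < n) :
    chainAdj m n node u v ↔ chainParent m n node u v ∨ chainBack m n node u v := by
  constructor
  · rintro ⟨j, i, hj, hi, rfl, rfl⟩
    rcases Nat.lt_or_ge (i + 1) n with h | h
    · exact Or.inl ⟨j, i, hj, h, rfl, by rw [Nat.mod_eq_of_lt h]⟩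
    · obtain rfl : n = i + 1 := by omega
      exact Or.inr ⟨j, hj, rfl, by rw [Nat.mod_self]⟩
  · rintro (⟨j, a, hj, ha, rfl, rfl⟩ | ⟨j, hj, rfl, rfl⟩)
    · exact ⟨j, a, hj, by omega, rfl, by rw [Nat.mod_eq_of_lt ha]⟩
    · exact ⟨j, n - 1, hj, by omega, rfl, by rw [Nat.sub_add_cancel hn, Nat.mod_self]⟩

theorem transGen_chainParent (hj : j < m) (ha : a + 1 < n) :
    Relation.TransGen (chainParent m n node) (node j 0) (node j (a + 1)) := by
  induction a with
  | zero => exact .single ⟨j, 0, hj, ha, rfl, rfl⟩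
  | succ a ih => exact (ih (by omega)).tail ⟨j, a + 1, hj, ha, rfl, rfl⟩

/-- A rank that increases along the edges of `chainParent`. A shared node lies on two cycles; the
minimum selects its position in the later one, where its parent is. -/
noncomputable def chainDepth (m n : ℕ) (node : ℕ → ℕ → V) (v : V) : ℕ :=
  sInf {d | ∃ j a, j < m ∧ a < n ∧ node j a = v ∧ d = (m - j) * n + a}

namespace IsOpenChain

variable (hchain : IsOpenChain m n node k)
include hchain

theorem node_succ_inj (hj : j < m) (ha : a + 1 < n) (hj' : j' < m) (ha' : a' + 1 < n)
    (h : node j (a + 1) = node j' (a' + 1)) : j = j' ∧ a = a' := by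
  obtain ⟨-, -, -, -, hinj, -⟩ := hchain
  have := hinj j (a + 1) j' (a' + 1) hj ha hj' ha' h
  omega

theorem node_zero_inj (hj : j < m) (hj' : j' < m) (h : node j 0 = node j' 0) : j = j' := by
  obtain ⟨-, hn, hk, -, hinj, -⟩ := hchain
  rcases hinj j 0 j' 0 hj (by omega) hj' (by omega) h with ⟨h, -⟩ | ⟨rfl, -, h⟩ | ⟨rfl, -, h⟩
  · exact h
  · exact absurd (hk j hj').1 (by omega)
  · exact absurd (hk j' hj).1 (by omega)

theorem node_zero_eq_node_succ (hj : j < m) (hj' : j' < m) (ha' : a' + 1 < n)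
    (h : node j 0 = node j' (a' + 1)) : j' = j + 1 ∧ a' + 1 = k j := by
  obtain ⟨-, -, -, -, hinj, -⟩ := hchain
  have := hinj j 0 j' (a' + 1) hj (by omega) hj' ha' h
  omega

theorem chainDepth_lt (h : chainParent m n node u v) :
    chainDepth m n node u < chainDepth m n node v := by
  obtain ⟨j, a, hj, ha, rfl, rfl⟩ := h
  have hle : chainDepth m n node (node j a) ≤ (m - j) * n + a :=
    Nat.sInf_le ⟨j, a, hj, by omega, rfl, rfl⟩
  obtain ⟨i, b, hi, hb, hnode, hdepth⟩ : chainDepth m n node (node j (a + 1)) ∈ _ :=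
    Nat.sInf_mem ⟨_, j, a + 1, hj, ha, rfl, rfl⟩
  suffices (m - j) * n + a < (m - i) * n + b by omega
  rcases b with _ | b
  · obtain ⟨rfl, -⟩ := hchain.node_zero_eq_node_succ hi hj ha hnode
    rw [show m - i = m - (i + 1) + 1 by omega, Nat.succ_mul]
    omega
  · obtain ⟨rfl, rfl⟩ := hchain.node_succ_inj hi hb hj ha hnode
    omega

theorem isHeavyBackForest {w : V → V → ℝ} (hw : ∀ u v, chainAdj m n node u v → 0 ≤ w u v)
    (hgt : ∀ j, j + 1 < m →
      w (node j (n - 1)) (node j 0) > w (node (j + 1) (k j - 1)) (node (j + 1) (k j))) :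
    IsHeavyBackForest (chainAdj m n node) (chainParent m n node) (chainBack m n node) w where
  adj_iff _ _ := chainAdj_iff (Nat.zero_lt_of_lt hchain.2.1)
  parent_unique := by
    rintro _ _ _ ⟨j, a, hj, ha, rfl, rfl⟩ ⟨j', a', hj', ha', rfl, h⟩
    obtain ⟨rfl, rfl⟩ := hchain.node_succ_inj hj ha hj' ha' h
    rfl
  back_unique := by
    rintro _ _ _ ⟨j, hj, rfl, rfl⟩ ⟨j', hj', rfl, h⟩
    rw [hchain.node_zero_inj hj hj' h]
  acyclic v hv := by
    have hlt := hv.lift (chainDepth m n node) fun _ _ => hchain.chainDepth_lt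
    rw [Relation.transGen_eq_self] at hlt
    exact hlt.false
  back_descendant := by
    rintro _ _ ⟨j, hj, rfl, rfl⟩
    have hn := hchain.2.1
    rw [show n - 1 = n - 2 + 1 by omega]
    exact transGen_chainParent hj (by omega)
  weight_nonneg := hw
  weight_lt := by
    rintro _ _ _ ⟨j', a, hj', ha, rfl, rfl⟩ ⟨j, hj, rfl, h⟩
    obtain ⟨rfl, hk⟩ := hchain.node_zero_eq_node_succ hj hj' ha h.symm
    simpa only [h, ← hk, Nat.add_sub_cancel] using hgt j hj'

end IsOpenChain

end OpenChain

/-- A coordination game without bonuses on a weighted open chain of cycles in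
which, at every shared node, the weight `w₁ʲ` of the incoming edge from within
the earlier cycle exceeds the weight `w₂ʲ` of the incoming edge from within
the later cycle, is weakly acyclic. -/
theorem weighted_open_chain_w1_gt_w2_weakly_acyclic
    {V : Type} [Fintype V] {M : Type} [Fintype M]
    (m n : ℕ) (node : ℕ → ℕ → V) (k : ℕ → ℕ)
    (hchain : IsOpenChain m n node k)
    (w : V → V → ℝ) (hw : ∀ u v, chainAdj m n node u v → 0 ≤ w u v)
    (hgt : ∀ j, j + 1 < m →
      w (node j (n - 1)) (node j 0) >
        w (node (j + 1) (k j - 1)) (node (j + 1) (k j)))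
    (C : V → Finset M) (hC : ∀ i, (C i).Nonempty) :
    ∀ s : V → M, Valid C s →
      ∃ L, ImpPath (chainAdj m n node) w (fun _ _ => 0) C s L := by
  exact weighted_open_chain_w1_gt_w2_weakly_acyclic_general (hchain.isHeavyBackForest hw hgt) C

end CG
end

section
/- Let N be a weighted open chain of cycles C_1,…,C_m without bonuses, where for each j ∈ {1,…,m−1} the shared node 1^j has two incoming edges: the edge n^j → 1^j of weight w_1^j (within C_j) and the edge (k−1)^{j+1} → 1^j of weight w_2^j (within C_{j+1}). If w_1^j < w_2^j for all j ∈ {1,…,m−1}, then the coordination game on N is weakly acyclic. -/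
open scoped Classical

namespace CG

/-!
In an open chain of cycles an unstable node always gains by copying one particular in-neighbour:
its only one or, at a node shared by two cycles, the predecessor in the later cycle if its colour is
available, and otherwise the predecessor in the earlier cycle. Removing from the first `j + 1`
cycles the entry `node j 0` of the last one leaves a block which depends on the rest of the chain
only through that entry. By induction on `j`, the block can be stabilised from inside, and after
letting the entry copy the exit `node j (n - 1)` twice and stabilising again, the exit need not
change the second time, so that the entry is stable too. Indeed, one pass either leaves the exit
unchanged or gives it the colour of the shared node of the last cycle; sending this colour around
once more then either stops before the shared node or confirms it, and changes nothing behind it.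
-/

/-- A coordination game without bonuses on a loop-free digraph with non-negative edge weights;
`adj u v` is the edge `u → v`, and `colours v` are the colours available to `v`. -/
structure Game (V M : Type*) where
  adj : V → V → Prop
  weight : V → V → ℝ
  colours : V → Finset M
  weight_nonneg : ∀ ⦃u v⦄, adj u v → 0 ≤ weight u v
  loopless : ∀ v, ¬ adj v v

namespace Game

section Digraph

variable {V M : Type*} (G : Game V M)

/-- The closed in-neighbourhood of `A`, whose colours determine the stability of the nodes
of `A`. -/
def inClosure (A : Set V) : Set V :=
  A ∪ {u | ∃ v ∈ A, G.adj u v}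

/-- The nodes `f a → f (a + 1) → ⋯ → f b` are distinct, and each of them but the first has no
other in-neighbour than the one before it. -/
structure IsPath (f : ℕ → V) (a b : ℕ) : Prop where
  injOn : Set.InjOn f (Set.Icc a b)
  pred_eq : ∀ i ∈ Set.Ico a b, ∀ u, G.adj u (f (i + 1)) → u = f i

variable {G} {f : ℕ → V} {a b : ℕ} {A : Set V}

theorem subset_inClosure : A ⊆ G.inClosure A :=
  Set.subset_union_left

theorem IsPath.mono (h : G.IsPath f a b) {a' b' : ℕ} (ha : a ≤ a') (hb : b' ≤ b) :
    G.IsPath f a' b' where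
  injOn := h.injOn.mono (Set.Icc_subset_Icc ha hb)
  pred_eq i hi := h.pred_eq i (Set.Ico_subset_Ico ha hb hi)

theorem IsPath.inClosure_subset (h : G.IsPath f a b) :
    G.inClosure (f '' Set.Ioc a b) ⊆ f '' Set.Icc a b := by
  rintro u (⟨i, hi, rfl⟩ | ⟨_, ⟨_ | i, hi, rfl⟩, hu⟩)
  · exact ⟨i, Set.Ioc_subset_Icc_self hi, rfl⟩
  · exact absurd hi.1 (Nat.not_lt_zero a)
  · exact ⟨i, ⟨Nat.le_of_lt_succ hi.1, (Nat.lt_of_succ_le hi.2).le⟩,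
      (h.pred_eq i ⟨Nat.le_of_lt_succ hi.1, hi.2⟩ u hu).symm⟩

theorem IsPath.notMem_inClosure (h : G.IsPath f a b) {i c : ℕ} (hi : i ∈ Set.Icc a b)
    (hic : i < c) : f i ∉ G.inClosure (f '' Set.Ioc c b) := fun hmem => by
  have hac : a ≤ c := hi.1.trans hic.le
  have hmem := (h.mono hac le_rfl).inClosure_subset hmem
  rw [h.injOn.mem_image_iff (Set.Icc_subset_Icc_left hac) hi] at hmem
  exact hmem.1.not_gt hic

/-- The path `f 0 → f 1 → ⋯ → f ℓ` runs through the entry `f (p + 1)` of a set `A` of nodes, which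
it does not meet otherwise. Its nodes after `f 0` have no further in-neighbours, except that an edge
at most as heavy as the one from `f p` may lead from the exit `E` of `A` to the entry. -/
structure AttachedPath (A : Set V) (E : V) (f : ℕ → V) (p ℓ : ℕ) : Prop where
  lt : p < ℓ
  injOn : Set.InjOn f (Set.Iic ℓ)
  notMem : ∀ i ≤ ℓ, f i ∉ A
  exit_mem : E ∈ A
  inClosure_subset : G.inClosure A ⊆ insert (f (p + 1)) A
  pred_eq : ∀ i < ℓ, i ≠ p → ∀ u, G.adj u (f (i + 1)) → u = f i
  adj_junction : G.adj (f p) (f (p + 1))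
  pred_junction : ∀ u, G.adj u (f (p + 1)) → u = f p ∨ u = E
  weight_le : G.weight E (f (p + 1)) ≤ G.weight (f p) (f (p + 1))

namespace AttachedPath

variable {E : V} {p ℓ i : ℕ}

theorem isPath_head (h : G.AttachedPath A E f p ℓ) : G.IsPath f 0 p where
  injOn := h.injOn.mono fun _ hi => hi.2.trans h.lt.le
  pred_eq i hi := h.pred_eq i (hi.2.trans h.lt) hi.2.ne

theorem isPath_tail (h : G.AttachedPath A E f p ℓ) : G.IsPath f (p + 1) ℓ where
  injOn := h.injOn.mono fun _ hi => hi.2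
  pred_eq i hi := h.pred_eq i hi.2 (Nat.lt_of_succ_le hi.1).ne'

theorem block_eq (h : G.AttachedPath A E f p ℓ) :
    A ∪ f '' Set.Ioc 0 ℓ =
      f '' Set.Ioc 0 p ∪ insert (f (p + 1)) A ∪ f '' Set.Ioc (p + 1) ℓ := by
  rw [← Set.Ioc_union_Ioc_eq_Ioc (Nat.zero_le (p + 1)) h.lt,
    ← Set.insert_Ioc_right_eq_Ioc_add_one (Nat.zero_le p), Set.image_union, Set.image_insert_eq]
  ext
  simp only [Set.mem_union, Set.mem_insert_iff]
  tauto

theorem disjoint_image (h : G.AttachedPath A E f p ℓ) {I J : Set ℕ} (hI : I ⊆ Set.Iic ℓ)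
    (hJ : J ⊆ Set.Iic ℓ) (hIJ : Disjoint I J) : Disjoint (f '' I) (f '' J) :=
  Set.disjoint_image_image fun _ hi _ hj hij =>
    Set.disjoint_left.mp hIJ hi (h.injOn (hI hi) (hJ hj) hij ▸ hj)

theorem notMem_core (h : G.AttachedPath A E f p ℓ) (hi : i ≤ ℓ) (hne : i ≠ p + 1) :
    f i ∉ insert (f (p + 1)) A := by
  rintro (heq | hmem)
  · exact hne (h.injOn hi (Nat.succ_le_of_lt h.lt) heq)
  · exact h.notMem i hi hmem

theorem disjoint_core (h : G.AttachedPath A E f p ℓ) {I : Set ℕ} (hI : I ⊆ Set.Iic ℓ)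
    (hp : p + 1 ∉ I) : Disjoint (f '' I) (insert (f (p + 1)) A) := by
  rw [Set.disjoint_left]
  rintro _ ⟨i, hi, rfl⟩
  exact h.notMem_core (hI hi) fun hip => hp (hip ▸ hi)

theorem inClosure_core_subset (h : G.AttachedPath A E f p ℓ) :
    G.inClosure (insert (f (p + 1)) A) ⊆ insert (f p) (insert (f (p + 1)) A) := by
  rintro u (hu | ⟨_, rfl | hv, hu⟩)
  · exact .inr hu
  · rcases h.pred_junction u hu with rfl | rfl
    · exact .inl rfl
    · exact .inr (.inr h.exit_mem)
  · exact .inr (h.inClosure_subset (.inr ⟨_, hv, hu⟩))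

theorem disjoint_inClosure_head_core (h : G.AttachedPath A E f p ℓ) :
    Disjoint (G.inClosure (f '' Set.Ioc 0 p)) (insert (f (p + 1)) A) :=
  (h.disjoint_core (fun _ hi => hi.2.trans h.lt.le) fun hmem =>
    hmem.2.not_gt p.lt_succ_self).mono_left h.isPath_head.inClosure_subset

theorem disjoint_inClosure_head_tail (h : G.AttachedPath A E f p ℓ) :
    Disjoint (G.inClosure (f '' Set.Ioc 0 p)) (f '' Set.Ioc (p + 1) ℓ) :=
  (h.disjoint_image (fun _ hi => hi.2.trans h.lt.le) (fun _ hj => hj.2) <|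
    Set.disjoint_left.mpr fun _ hi hj => (hi.2.trans p.le_succ).not_gt hj.1).mono_left
      h.isPath_head.inClosure_subset

theorem disjoint_inClosure_core_tail (h : G.AttachedPath A E f p ℓ) :
    Disjoint (G.inClosure (insert (f (p + 1)) A)) (f '' Set.Ioc (p + 1) ℓ) := by
  refine Disjoint.mono_left h.inClosure_core_subset (Set.disjoint_insert_left.mpr ⟨?_, ?_⟩)
  · rw [h.injOn.mem_image_iff (fun _ hi => hi.2) h.lt.le]
    exact fun hmem => hmem.1.not_gt p.lt_succ_self
  · exact (h.disjoint_core (fun _ hi => hi.2) fun hmem => hmem.1.false).symm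

theorem inClosure_block_subset (h : G.AttachedPath A E f p ℓ) :
    G.inClosure (A ∪ f '' Set.Ioc 0 ℓ) ⊆ insert (f 0) (A ∪ f '' Set.Ioc 0 ℓ) := by
  have hpath {i : ℕ} (hi : i ≤ ℓ) : f i ∈ insert (f 0) (A ∪ f '' Set.Ioc 0 ℓ) := by
    rcases i.eq_zero_or_pos with rfl | hpos
    · exact .inl rfl
    · exact .inr (.inr ⟨i, ⟨hpos, hi⟩, rfl⟩)
  rintro u (hu | ⟨_, hv | ⟨_ | i, hi, rfl⟩, hu⟩)
  · exact .inr hu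
  · rcases h.inClosure_subset (.inr ⟨_, hv, hu⟩) with rfl | hA
    · exact hpath h.lt
    · exact .inr (.inl hA)
  · exact absurd hi.1 (Nat.lt_irrefl 0)
  · rcases eq_or_ne i p with rfl | hip
    · rcases h.pred_junction u hu with rfl | rfl
      · exact hpath h.lt.le
      · exact .inr (.inl h.exit_mem)
    · rw [h.pred_eq i hi.2 hip u hu]
      exact hpath (Nat.le_of_lt hi.2)

end AttachedPath

end Digraph

section Moves

variable {V M : Type*} [Fintype V] (G : Game V M)

/-- The payoff of colour `c` to the node `v` when the other nodes play `s`: the total weight of the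
edges into `v` from nodes of colour `c`. -/
noncomputable def support (s : V → M) (v : V) (c : M) : ℝ :=
  ∑ u with G.adj u v ∧ s u = c, G.weight u v

/-- The node `v` has no profitable deviation from `s`. -/
def Stable (s : V → M) (v : V) : Prop :=
  ∀ c ∈ G.colours v, G.support s v c ≤ G.support s v (s v)

/-- All nodes of `A` are stable in `s`. -/
def StableOn (A : Set V) (s : V → M) : Prop :=
  ∀ v ∈ A, G.Stable s v

/-- A profitable deviation of a single node, which belongs to `A`. -/
def Move (A : Set V) (s s' : V → M) : Prop :=
  ∃ v ∈ A, ∃ c ∈ G.colours v,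
    G.support s v (s v) < G.support s v c ∧ s' = Function.update s v c

/-- A finite sequence of profitable deviations of single nodes of `A`. -/
def Reach (A : Set V) : (V → M) → (V → M) → Prop :=
  Relation.ReflTransGen (G.Move A)

/-- In the strategy `s`, the node `v` is either stable or gains by copying the colour of `q`. -/
def Follows (s : V → M) (v q : V) : Prop :=
  ¬ G.Stable s v → s q ∈ G.colours v ∧ G.support s v (s v) < G.support s v (s q)

variable {G} {A B : Set V} {s s' : V → M} {v p q : V} {c : M}

theorem support_nonneg : 0 ≤ G.support s v c :=
  Finset.sum_nonneg fun _ hu => G.weight_nonneg (Finset.mem_filter.mp hu).2.1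

theorem support_congr (h : ∀ u, G.adj u v → s' u = s u) :
    G.support s' v c = G.support s v c := by
  unfold support
  congr 1
  exact Finset.filter_congr fun u _ => and_congr_right fun hu => by rw [h u hu]

theorem support_eq_zero (h : ∀ u, G.adj u v → s u ≠ c) : G.support s v c = 0 :=
  Finset.sum_eq_zero fun u hu =>
    absurd (Finset.mem_filter.mp hu).2.2 (h u (Finset.mem_filter.mp hu).2.1)

theorem weight_le_support (hp : G.adj p v) : G.weight p v ≤ G.support s v (s p) :=
  Finset.single_le_sum (f := fun u => G.weight u v)
    (fun _ hu => G.weight_nonneg (Finset.mem_filter.mp hu).2.1)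
    (Finset.mem_filter.mpr ⟨Finset.mem_univ p, hp, rfl⟩)

theorem support_le_of_heavier_pred (hp : G.adj p v) (hpq : ∀ u, G.adj u v → u = p ∨ u = q)
    (hle : G.weight q v ≤ G.weight p v) : G.support s v c ≤ G.support s v (s p) := by
  rcases eq_or_ne (s p) c with rfl | hc
  · rfl
  refine le_trans ?_ (weight_le_support hp)
  have hsub : Finset.univ.filter (fun u => G.adj u v ∧ s u = c) ⊆ {q} := fun u hu => by
    obtain ⟨hadj, hu⟩ := (Finset.mem_filter.mp hu).2
    rcases hpq u hadj with rfl | rfl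
    · exact absurd hu hc
    · exact Finset.mem_singleton_self u
  rcases Finset.subset_singleton_iff.mp hsub with h | h
  · simpa only [support, h, Finset.sum_empty] using G.weight_nonneg hp
  · simpa only [support, h, Finset.sum_singleton] using hle

theorem Stable.congr (h : G.Stable s v) (hv : s' v = s v) (hu : ∀ u, G.adj u v → s' u = s u) :
    G.Stable s' v := fun c hc => by
  rw [support_congr hu, support_congr hu, hv]
  exact h c hc

theorem Follows.stable (h : G.Follows s v q) (hq : s q = s v) : G.Stable s v := by
  by_contra hv
  have := (h hv).2
  rw [hq] at this
  exact lt_irrefl _ this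

theorem Follows.reach (h : G.Follows s v q) (hs : ¬ G.Stable s v) (hv : v ∈ A) :
    G.Reach A s (Function.update s v (s q)) :=
  .single ⟨v, hv, s q, (h hs).1, (h hs).2, rfl⟩

theorem follows_of_support_le (h : ∀ c ∈ G.colours v, G.support s v c ≤ G.support s v (s q))
    (hq : s q ∈ G.colours v) : G.Follows s v q := fun hs => by
  simp only [Stable, not_forall, not_le] at hs
  obtain ⟨c, hc, hlt⟩ := hs
  exact ⟨hq, hlt.trans_le (h c hc)⟩

theorem follows_of_forall_ne (h : ∀ u, G.adj u v → u ≠ q → s u ∉ G.colours v) :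
    G.Follows s v q := fun hs => by
  simp only [Stable, not_forall, not_le] at hs
  obtain ⟨c, hc, hlt⟩ := hs
  suffices s q = c from this ▸ ⟨hc, hlt⟩
  by_contra hqc
  refine (support_nonneg.trans_lt hlt).ne' (support_eq_zero fun u hu huc => ?_)
  subst huc
  exact h u hu (by rintro rfl; exact hqc rfl) hc

theorem follows_of_forall_eq (h : ∀ u, G.adj u v → u = q) : G.Follows s v q :=
  follows_of_forall_ne fun u hu hne => absurd (h u hu) hne

theorem StableOn.mono (h : G.StableOn B s) (hAB : A ⊆ B) : G.StableOn A s :=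
  fun v hv => h v (hAB hv)

theorem StableOn.union (hA : G.StableOn A s) (hB : G.StableOn B s) : G.StableOn (A ∪ B) s :=
  fun v hv => hv.elim (hA v) (hB v)

theorem StableOn.insert (hv : G.Stable s v) (hA : G.StableOn A s) :
    G.StableOn (insert v A) s :=
  Set.forall_mem_insert.mpr ⟨hv, hA⟩

theorem StableOn.congr (h : G.StableOn A s) (heq : Set.EqOn s' s (G.inClosure A)) :
    G.StableOn A s' := fun v hv =>
  (h v hv).congr (heq (subset_inClosure hv)) fun _ hu => heq (Or.inr ⟨v, hv, hu⟩)

theorem StableOn.update (h : G.StableOn A s) (hv : v ∉ G.inClosure A) :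
    G.StableOn A (Function.update s v c) :=
  h.congr fun _ hu => Function.update_of_ne (by rintro rfl; exact hv hu) _ _

theorem Reach.mono (h : G.Reach A s s') (hAB : A ⊆ B) : G.Reach B s s' :=
  Relation.ReflTransGen.mono (fun _ _ ⟨v, hv, hm⟩ => ⟨v, hAB hv, hm⟩) _ _ h

theorem Reach.trans {s'' : V → M} (h : G.Reach A s s') (h' : G.Reach A s' s'') :
    G.Reach A s s'' :=
  Relation.ReflTransGen.trans h h'

theorem Reach.eqOn (h : G.Reach A s s') : Set.EqOn s' s Aᶜ := fun u hu => by
  induction h with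
  | refl => rfl
  | tail _ hm ih =>
    obtain ⟨v, hv, c, _, _, rfl⟩ := hm
    rw [Function.update_of_ne (by rintro rfl; exact hu hv), ih]

theorem Reach.stableOn (h : G.Reach B s s') (hs : G.StableOn A s)
    (hd : Disjoint (G.inClosure A) B) : G.StableOn A s' :=
  hs.congr (h.eqOn.mono hd.subset_compl_right)

end Moves

section Feedback

variable {V M : Type*} [Fintype V] (G : Game V M)

/-- When the entry `X` copies the exit `E`, moves inside `A` can stabilise `A` again without
changing the colour of `E`. -/
def Settled (A : Set V) (X E : V) (s : V → M) : Prop :=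
  ∃ s', G.Reach A (Function.update s X (s E)) s' ∧ G.StableOn A s' ∧ s' E = s E

/-- A set `A` of nodes which reads only the colour of its entry `X`, can be stabilised by moves
inside `A`, and in which letting `X` copy the exit `E` once, from a stable state, can be made to
lead to a settled one. -/
structure FeedbackBlock (A : Set V) (X E : V) : Prop where
  entry_notMem : X ∉ A
  exit_mem : E ∈ A
  inClosure_subset : G.inClosure A ⊆ insert X A
  exists_reach : ∀ s : V → M, ∃ s', G.Reach A s s' ∧ G.StableOn A s'
  exists_settled : ∀ s : V → M, G.StableOn A s →
    ∃ s', G.Reach A (Function.update s X (s E)) s' ∧ G.StableOn A s' ∧ G.Settled A X E s'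

variable {G} {f : ℕ → V} {a b : ℕ} {A : Set V} {X E : V} {s : V → M}

theorem IsPath.exists_reach (h : G.IsPath f a b) (hab : a ≤ b) (s : V → M) :
    ∃ s', G.Reach (f '' Set.Ioc a b) s s' ∧ G.StableOn (f '' Set.Ioc a b) s' ∧
      (G.StableOn (f '' Set.Ioc (a + 1) b) s →
        s' (f b) = s (f a) ∨ (a < b ∧ s' (f b) = s (f b))) := by
  induction b, hab using Nat.le_induction with
  | base => exact ⟨s, .refl, by simp [StableOn], fun _ => .inl rfl⟩
  | succ b hab ih =>
    have hpath := h.mono le_rfl b.le_succ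
    obtain ⟨s', hr, hs', hout⟩ := ih hpath
    have hpred := h.pred_eq b ⟨hab, b.lt_succ_self⟩
    have hnew : f (b + 1) ∉ f '' Set.Icc a b := by
      rw [h.injOn.mem_image_iff (Set.Icc_subset_Icc_right b.le_succ) ⟨by omega, le_rfl⟩]
      exact fun hmem => hmem.2.not_gt b.lt_succ_self
    have hkeep : s' (f (b + 1)) = s (f (b + 1)) :=
      hr.eqOn fun hmem => hnew (Set.image_mono Set.Ioc_subset_Icc_self hmem)
    have hsub := Set.subset_insert (f (b + 1)) (f '' Set.Ioc a b)
    rw [← Set.insert_Ioc_right_eq_Ioc_add_one hab, Set.image_insert_eq]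
    by_cases hst : G.Stable s' (f (b + 1))
    · exact ⟨s', hr.mono hsub, hs'.insert hst, fun _ => .inr ⟨Nat.lt_succ_of_le hab, hkeep⟩⟩
    refine ⟨Function.update s' (f (b + 1)) (s' (f b)),
      (hr.mono hsub).trans ((follows_of_forall_eq hpred).reach hst (Set.mem_insert _ _)),
      (hs'.update fun hmem => hnew (hpath.inClosure_subset hmem)).insert
        ((follows_of_forall_eq hpred).stable ?_), fun hs => .inl ?_⟩
    · rw [Function.update_self, Function.update_of_ne]
      exact fun hne => hnew ⟨b, ⟨hab, le_rfl⟩, hne⟩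
    · rw [Function.update_self]
      by_contra hne
      obtain ⟨hlt, hfb⟩ := (hout (hs.mono (Set.image_mono
        (Set.Ioc_subset_Ioc_right b.le_succ)))).resolve_left hne
      exact hst ((hs _ ⟨b + 1, ⟨Nat.succ_lt_succ hlt, le_rfl⟩, rfl⟩).congr hkeep
        fun u hu => by rw [hpred u hu, hfb])

theorem settled_of_eq (hs : G.StableOn A s) (h : s E = s X) : G.Settled A X E s :=
  ⟨s, by rw [h, Function.update_eq_self]; exact .refl, hs, rfl⟩

theorem IsPath.feedbackBlock (h : G.IsPath f a b) (hab : a < b) :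
    G.FeedbackBlock (f '' Set.Ioc a b) (f a) (f b) where
  entry_notMem := by
    rw [h.injOn.mem_image_iff Set.Ioc_subset_Icc_self ⟨le_rfl, hab.le⟩]
    exact fun hmem => hmem.1.false
  exit_mem := ⟨b, ⟨hab, le_rfl⟩, rfl⟩
  inClosure_subset := by
    rw [← Set.image_insert_eq, Set.Ioc_insert_left hab.le]
    exact h.inClosure_subset
  exists_reach s :=
    let ⟨s', hr, hs', _⟩ := h.exists_reach hab.le s
    ⟨s', hr, hs'⟩
  exists_settled s hs := by
    obtain ⟨s', hr, hs', hout⟩ := h.exists_reach hab.le (Function.update s (f a) (s (f b)))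
    have hfirst : f a ∉ f '' Set.Ioc a b := by
      rw [h.injOn.mem_image_iff Set.Ioc_subset_Icc_self ⟨le_rfl, hab.le⟩]
      exact fun hmem => hmem.1.false
    have hentry : s' (f a) = s (f b) := by rw [hr.eqOn hfirst, Function.update_self]
    refine ⟨s', hr, hs', settled_of_eq hs' ?_⟩
    rw [hentry]
    rcases hout ((hs.mono (Set.image_mono (Set.Ioc_subset_Ioc_left a.le_succ))).update
      (h.notMem_inClosure ⟨le_rfl, hab.le⟩ a.lt_succ_self)) with hcopy | ⟨-, hkeep⟩
    · rw [hcopy, Function.update_self]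
    · rw [hkeep, Function.update_of_ne fun heq : f b = f a => hfirst ⟨b, ⟨hab, le_rfl⟩, heq⟩]

theorem FeedbackBlock.exists_reach_insert (h : G.FeedbackBlock A X E) (s : V → M)
    (hX : ∀ t, Set.EqOn t s (insert X A)ᶜ → G.Follows t X E) :
    ∃ s', G.Reach (insert X A) s s' ∧ G.StableOn (insert X A) s' := by
  have hsub := Set.subset_insert X A
  obtain ⟨s₀, hr₀, hs₀⟩ := h.exists_reach s
  by_cases hX₀ : G.Stable s₀ X
  · exact ⟨s₀, hr₀.mono hsub, hs₀.insert hX₀⟩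
  obtain ⟨s₁, hr₁, hs₁, s₂, hr₂, hs₂, hexit⟩ := h.exists_settled s₀ hs₀
  have hreach₀ := hr₀.mono hsub
  have hreach₁ := (hreach₀.trans ((hX s₀ hreach₀.eqOn).reach hX₀ (Set.mem_insert X A))).trans
    (hr₁.mono hsub)
  by_cases hX₁ : G.Stable s₁ X
  · exact ⟨s₁, hreach₁, hs₁.insert hX₁⟩
  have hreach₂ := (hreach₁.trans ((hX s₁ hreach₁.eqOn).reach hX₁ (Set.mem_insert X A))).trans
    (hr₂.mono hsub)
  refine ⟨s₂, hreach₂, hs₂.insert ((hX s₂ hreach₂.eqOn).stable ?_)⟩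
  rw [hexit, hr₂.eqOn h.entry_notMem, Function.update_self]

namespace AttachedPath

variable {p ℓ : ℕ}

theorem support_le (h : G.AttachedPath A E f p ℓ) (s : V → M) (c : M) :
    G.support s (f (p + 1)) c ≤ G.support s (f (p + 1)) (s (f p)) :=
  support_le_of_heavier_pred h.adj_junction h.pred_junction h.weight_le

theorem stable_junction (h : G.AttachedPath A E f p ℓ) (hs : s (f p) = s (f (p + 1))) :
    G.Stable s (f (p + 1)) := fun c _ => hs ▸ h.support_le s c

theorem exists_reach_core (h : G.AttachedPath A E f p ℓ) (hA : G.FeedbackBlock A (f (p + 1)) E)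
    (s : V → M) : ∃ s', G.Reach (insert (f (p + 1)) A) s s' ∧
      G.StableOn (insert (f (p + 1)) A) s' := by
  have hp := h.notMem_core h.lt.le p.lt_succ_self.ne
  by_cases hmem : s (f p) ∈ G.colours (f (p + 1))
  · have hsub := Set.subset_insert (f (p + 1)) A
    obtain ⟨s₁, hr₁, hs₁⟩ := hA.exists_reach s
    by_cases hst : G.Stable s₁ (f (p + 1))
    · exact ⟨s₁, hr₁.mono hsub, hs₁.insert hst⟩
    have hfollows : G.Follows s₁ (f (p + 1)) (f p) :=
      follows_of_support_le (fun c _ => h.support_le s₁ c)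
        (by rwa [(hr₁.mono hsub).eqOn hp])
    obtain ⟨s₂, hr₂, hs₂⟩ := hA.exists_reach (Function.update s₁ (f (p + 1)) (s₁ (f p)))
    refine ⟨s₂, ((hr₁.mono hsub).trans (hfollows.reach hst (Set.mem_insert _ _))).trans
      (hr₂.mono hsub), hs₂.insert (h.stable_junction ?_)⟩
    rw [(hr₂.mono hsub).eqOn hp, hr₂.eqOn hA.entry_notMem, Function.update_self,
      Function.update_of_ne fun heq : f p = f (p + 1) => hp (.inl heq)]
  · refine hA.exists_reach_insert s fun t ht => follows_of_forall_ne fun u hu hne => ?_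
    rwa [(h.pred_junction u hu).resolve_right hne, ht hp]

theorem exists_reach_block (h : G.AttachedPath A E f p ℓ) (hA : G.FeedbackBlock A (f (p + 1)) E)
    (s : V → M) : ∃ s', G.Reach (A ∪ f '' Set.Ioc 0 ℓ) s s' ∧
      G.StableOn (A ∪ f '' Set.Ioc 0 ℓ) s' ∧ (G.StableOn (f '' Set.Ioc (p + 2) ℓ) s →
        s' (f ℓ) = s' (f (p + 1)) ∨ s' (f ℓ) = s (f ℓ)) := by
  obtain ⟨s₁, hr₁, hs₁, -⟩ := h.isPath_head.exists_reach p.zero_le s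
  obtain ⟨s₂, hr₂, hs₂⟩ := h.exists_reach_core hA s₁
  obtain ⟨s₃, hr₃, hs₃, hout⟩ := h.isPath_tail.exists_reach h.lt s₂
  have hr₁₂ := (hr₁.mono Set.subset_union_left).trans (hr₂.mono Set.subset_union_right)
  have hdisj {I : Set ℕ} (hI : I ⊆ Set.Ioc (p + 1) ℓ) :
      Disjoint (f '' I) (f '' Set.Ioc 0 p ∪ insert (f (p + 1)) A) :=
    Set.disjoint_union_right.mpr
      ⟨h.disjoint_image (fun _ hi => (hI hi).2) (fun _ hj => hj.2.trans h.lt.le) <|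
        Set.disjoint_left.mpr fun _ hi hj => (hj.2.trans p.le_succ).not_gt (hI hi).1,
      h.disjoint_core (fun _ hi => (hI hi).2) fun hmem => (hI hmem).1.false⟩
  rw [h.block_eq]
  refine ⟨s₃, (hr₁₂.mono Set.subset_union_left).trans (hr₃.mono Set.subset_union_right),
    ((hr₃.stableOn (hr₂.stableOn hs₁ h.disjoint_inClosure_head_core)
      h.disjoint_inClosure_head_tail).union
        (hr₃.stableOn hs₂ h.disjoint_inClosure_core_tail)).union hs₃, fun hs => ?_⟩
  have hs₂_tail : G.StableOn (f '' Set.Ioc (p + 2) ℓ) s₂ :=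
    hr₁₂.stableOn hs ((hdisj fun _ hi => ⟨hi.1, hi.2⟩).mono_left
      (h.isPath_tail.mono (p + 1).le_succ le_rfl).inClosure_subset)
  rcases hout hs₂_tail with hcopy | ⟨hlt, hkeep⟩
  · left
    rw [hcopy, hr₃.eqOn (Set.disjoint_left.mp h.disjoint_inClosure_core_tail
      (subset_inClosure (Set.mem_insert _ _)))]
  · right
    rw [hkeep, hr₁₂.eqOn (Set.disjoint_left.mp (hdisj subset_rfl) ⟨ℓ, ⟨hlt, le_rfl⟩, rfl⟩)]

theorem stable_junction_of_exit_eq (h : G.AttachedPath A E f p ℓ) {s' : V → M}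
    (hs : G.StableOn (A ∪ f '' Set.Ioc 0 ℓ) s) (heq : s (f ℓ) = s (f (p + 1)))
    (hoff : Set.EqOn s' s (insert (f (p + 1)) A))
    (hp : s' (f p) = s (f ℓ) ∨ s' (f p) = s (f p)) : G.Stable s' (f (p + 1)) := by
  have hjunction := hoff (Set.mem_insert _ _)
  rcases hp with hexit | hkeep
  · exact h.stable_junction (by rw [hexit, heq, hjunction])
  · refine (hs _ (.inr ⟨p + 1, ⟨p.succ_pos, h.lt⟩, rfl⟩)).congr hjunction fun u hu => ?_
    rcases h.pred_junction u hu with rfl | rfl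
    · exact hkeep
    · exact hoff (.inr h.exit_mem)

theorem settled_of_exit_eq_junction (h : G.AttachedPath A E f p ℓ)
    (hs : G.StableOn (A ∪ f '' Set.Ioc 0 ℓ) s) (heq : s (f ℓ) = s (f (p + 1))) :
    G.Settled (A ∪ f '' Set.Ioc 0 ℓ) (f 0) (f ℓ) s := by
  obtain ⟨s', hr, hs', hout⟩ :=
    h.isPath_head.exists_reach p.zero_le (Function.update s (f 0) (s (f ℓ)))
  have hoff : Set.EqOn s' s (f '' Set.Icc 0 p)ᶜ := fun u hu => by
    rw [hr.eqOn fun hmem => hu (Set.image_mono Set.Ioc_subset_Icc_self hmem),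
      Function.update_of_ne (by rintro rfl; exact hu ⟨0, ⟨le_rfl, p.zero_le⟩, rfl⟩)]
  have hoff_core : Set.EqOn s' s (insert (f (p + 1)) A) := hoff.mono <|
    (h.disjoint_core (fun _ hi => hi.2.trans h.lt.le) fun hmem =>
      hmem.2.not_gt p.lt_succ_self).subset_compl_left
  have hoff_tail : Set.EqOn s' s (f '' Set.Icc (p + 1) ℓ) := hoff.mono <|
    (h.disjoint_image (fun _ hi => hi.2.trans h.lt.le) (fun _ hj => hj.2) <|
      Set.disjoint_left.mpr fun _ hi hj => hi.2.not_gt hj.1).subset_compl_left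
  have hs_parts := h.block_eq ▸ hs
  have hs_head : G.StableOn (f '' Set.Ioc (0 + 1) p) s := hs_parts.mono fun _ hu =>
    .inl (.inl (Set.image_mono (Set.Ioc_subset_Ioc_left zero_le_one) hu))
  have hfp : s' (f p) = s (f ℓ) ∨ s' (f p) = s (f p) := by
    rcases hout (hs_head.update (h.isPath_head.notMem_inClosure ⟨le_rfl, p.zero_le⟩ one_pos))
      with hcopy | ⟨hpos, hkeep⟩
    · exact .inl (by rw [hcopy, Function.update_self])
    · exact .inr (by rw [hkeep, Function.update_of_ne
        (h.injOn.ne h.lt.le (Nat.zero_le ℓ) hpos.ne')])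
  refine ⟨s', hr.mono ?_, ?_, hoff_tail ⟨ℓ, ⟨h.lt, le_rfl⟩, rfl⟩⟩ <;> rw [h.block_eq]
  · exact fun _ hu => .inl (.inl hu)
  · exact (hs'.union (((hs.mono Set.subset_union_left).congr
      (hoff_core.mono h.inClosure_subset)).insert
        (h.stable_junction_of_exit_eq hs heq hoff_core hfp))).union
          ((hs_parts.mono Set.subset_union_right).congr
            (hoff_tail.mono h.isPath_tail.inClosure_subset))

theorem feedbackBlock (h : G.AttachedPath A E f p ℓ) (hA : G.FeedbackBlock A (f (p + 1)) E) :
    G.FeedbackBlock (A ∪ f '' Set.Ioc 0 ℓ) (f 0) (f ℓ) := by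
  have hfirst {a : ℕ} : f 0 ∉ f '' Set.Icc (a + 1) ℓ := by
    rw [h.injOn.mem_image_iff (fun _ hi => hi.2) ℓ.zero_le]
    exact fun hmem => hmem.1.not_gt a.succ_pos
  have hlast : f ℓ ∈ f '' Set.Icc 1 ℓ := ⟨ℓ, ⟨Nat.one_le_of_lt h.lt, le_rfl⟩, rfl⟩
  have hentry : f 0 ∉ A ∪ f '' Set.Ioc 0 ℓ := fun hmem => hmem.elim (h.notMem 0 ℓ.zero_le) hfirst
  refine ⟨hentry, .inr hlast, h.inClosure_block_subset, fun s => ?_, fun s hs => ?_⟩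
  · obtain ⟨s', hr, hs', -⟩ := h.exists_reach_block hA s
    exact ⟨s', hr, hs'⟩
  obtain ⟨s', hr, hs', hout⟩ := h.exists_reach_block hA (Function.update s (f 0) (s (f ℓ)))
  have hs_tail : G.StableOn (f '' Set.Ioc (p + 2) ℓ) s := hs.mono fun _ hu =>
    .inr (Set.image_mono (Set.Ioc_subset_Ioc_left (Nat.zero_le _)) hu)
  have htail := (h.isPath_tail.mono (p + 1).le_succ le_rfl).inClosure_subset
  refine ⟨s', hr, hs', ?_⟩
  rcases hout (hs_tail.update fun hmem => hfirst (htail hmem)) with hcopy | hkeep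
  · exact h.settled_of_exit_eq_junction hs' hcopy
  · apply settled_of_eq hs'
    rw [hkeep, hr.eqOn hentry, Function.update_self,
      Function.update_of_ne fun heq : f ℓ = f 0 => hfirst (heq ▸ hlast)]

end AttachedPath

end Feedback

section ImprovementPath

variable {V M : Type} [Fintype V] {G : Game V M} {A : Set V} {s s' : V → M} {v : V}

theorem payoff_eq_support (h : ∀ u, u ≠ v → s' u = s u) :
    payoff G.adj G.weight (fun _ _ => 0) s' v = G.support s v (s' v) := by
  have hpred : ∀ u, G.adj u v → s u = s' u := fun u hu =>
    (h u (by rintro rfl; exact G.loopless u hu)).symm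
  rw [payoff, Nat.cast_zero, add_zero, support_congr hpred, support]

theorem Move.uniDev (h : G.Move A s s') (hs : Valid G.colours s) :
    UniDev G.adj G.weight (fun _ _ => 0) G.colours s s' := by
  obtain ⟨v, -, c, hc, hlt, rfl⟩ := h
  have hoff : ∀ u, u ≠ v → Function.update s v c u = s u := fun u hu =>
    Function.update_of_ne hu _ _
  refine ⟨⟨fun u => ?_, fun heq => ?_, fun u hu => ?_⟩, v, fun u hu => (hoff u hu).symm⟩
  · rcases eq_or_ne u v with rfl | hu
    · rwa [Function.update_self]
    · rw [hoff u hu]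
      exact hs u
  · rw [eq_comm, Function.update_eq_self_iff] at heq
    exact hlt.ne (by rw [heq])
  · obtain rfl : u = v := by
      by_contra hne
      exact hu (hoff u hne).symm
    rwa [payoff_eq_support fun _ _ => rfl, payoff_eq_support hoff, Function.update_self]

theorem isNash_of_stable (hs : Valid G.colours s) (hst : ∀ v, G.Stable s v) :
    IsNash G.adj G.weight (fun _ _ => 0) G.colours s := by
  refine ⟨hs, fun s' ⟨⟨hs', hne, hgain⟩, v, hoff⟩ => ?_⟩
  obtain ⟨u, hu⟩ := Function.ne_iff.mp hne
  obtain rfl : u = v := by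
    by_contra huv
    exact hu (hoff u huv)
  have hlt := hgain u hu
  rw [payoff_eq_support fun _ _ => rfl, payoff_eq_support fun x hx => (hoff x hx).symm] at hlt
  exact (hst u _ (hs' u)).not_gt hlt

theorem Reach.exists_impPath (h : G.Reach A s s') (hst : ∀ v, G.Stable s' v)
    (hs : Valid G.colours s) :
    ∃ L, ImpPath G.adj G.weight (fun _ _ => 0) G.colours s L := by
  induction h using Relation.ReflTransGen.head_induction_on with
  | refl => exact ⟨0, fun _ => s', rfl, fun t ht => absurd ht t.not_lt_zero,
      isNash_of_stable hs hst⟩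
  | @head s₀ s₁ hmove _ ih =>
    have hdev := hmove.uniDev hs
    obtain ⟨L, σ, rfl, hσ, hnash⟩ := ih hdev.1.1
    refine ⟨L + 1, fun t => Nat.casesOn t s₀ σ, rfl, fun t ht => ?_, hnash⟩
    rcases t with _ | t
    · exact hdev
    · exact hσ t (Nat.lt_of_succ_lt_succ ht)

end ImprovementPath

end Game

/-- The nodes of the first `j + 1` cycles, except the entry `node j 0` of the last of them;
the shared nodes `node j' 0` with `j' < j` are included as `node (j' + 1) (k j')`. -/
def block {V : Type} (n : ℕ) (node : ℕ → ℕ → V) : ℕ → Set V :=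
  Set.accumulate fun j => node j '' Set.Ioc 0 (n - 1)

namespace IsOpenChain

section Geometry

variable {V : Type} {m n : ℕ} {node : ℕ → ℕ → V} {k : ℕ → ℕ} {u : V} {j i : ℕ}

theorem lt_of_le_pred (h : IsOpenChain m n node k) (hi : i ≤ n - 1) : i < n := by
  have ⟨_, hn, _⟩ := h
  omega

theorem chainAdj_iff (h : IsOpenChain m n node k) {v : V} :
    chainAdj m n node u v ↔ ∃ j < m, (∃ i < n - 1, u = node j i ∧ v = node j (i + 1)) ∨
      (u = node j (n - 1) ∧ v = node j 0) := by
  have ⟨_, hn, _⟩ := h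
  constructor
  · rintro ⟨j, i, hj, hi, rfl, rfl⟩
    rcases Nat.lt_or_ge i (n - 1) with hlt | hge
    · exact ⟨j, hj, .inl ⟨i, hlt, rfl, by rw [Nat.mod_eq_of_lt (by omega)]⟩⟩
    · obtain rfl : i = n - 1 := by omega
      exact ⟨j, hj, .inr ⟨rfl, by rw [Nat.sub_add_cancel (by omega), Nat.mod_self]⟩⟩
  · rintro ⟨j, hj, ⟨i, hi, rfl, rfl⟩ | ⟨rfl, rfl⟩⟩
    · exact ⟨j, i, hj, by omega, rfl, by rw [Nat.mod_eq_of_lt (by omega)]⟩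
    · exact ⟨j, n - 1, hj, by omega, rfl, by rw [Nat.sub_add_cancel (by omega), Nat.mod_self]⟩

theorem injOn_node (h : IsOpenChain m n node k) (hj : j < m) :
    Set.InjOn (node j) (Set.Iic (n - 1)) := fun i hi i' hi' heq => by
  have ⟨_, _, _, _, hinj, _⟩ := h
  rcases hinj j i j i' hj (h.lt_of_le_pred hi) hj (h.lt_of_le_pred hi') heq with
    ⟨-, heq⟩ | ⟨hj', -⟩ | ⟨hj', -⟩
  · exact heq
  · omega
  · omega

theorem not_chainAdj_self (h : IsOpenChain m n node k) (v : V) : ¬ chainAdj m n node v v := by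
  have ⟨_, hn, _⟩ := h
  rw [h.chainAdj_iff]
  rintro ⟨j, hj, ⟨i, hi, rfl, heq⟩ | ⟨rfl, heq⟩⟩
  · have := h.injOn_node hj (Nat.le_of_lt hi) (Nat.succ_le_of_lt hi) heq
    omega
  · have := h.injOn_node hj Set.self_mem_Iic (Nat.zero_le _) heq
    omega

theorem pred_node_succ (h : IsOpenChain m n node k) (hj : j < m) (hi : i < n - 1)
    (hu : chainAdj m n node u (node j (i + 1))) :
    u = node j i ∨ ∃ j', j = j' + 1 ∧ i + 1 = k j' ∧ u = node j' (n - 1) := by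
  have ⟨_, hn, _, _, hinj, _⟩ := h
  obtain ⟨j', hj', ⟨i', hi', rfl, heq⟩ | ⟨rfl, heq⟩⟩ := h.chainAdj_iff.mp hu
  · have := hinj j (i + 1) j' (i' + 1) hj (by omega) hj' (by omega) heq
    obtain ⟨rfl, rfl⟩ : j = j' ∧ i = i' := by omega
    exact .inl rfl
  · have := hinj j (i + 1) j' 0 hj (by omega) hj' (by omega) heq
    exact .inr ⟨j', by omega, by omega, rfl⟩

theorem pred_last_entry (h : IsOpenChain m n node k)
    (hu : chainAdj m n node u (node (m - 1) 0)) : u = node (m - 1) (n - 1) := by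
  have ⟨hm, hn, hk, _, hinj, _⟩ := h
  obtain ⟨j, hj, ⟨i, hi, rfl, heq⟩ | ⟨rfl, heq⟩⟩ := h.chainAdj_iff.mp hu
  · have := hinj (m - 1) 0 j (i + 1) (by omega) (by omega) hj (by omega) heq
    omega
  · have := hinj (m - 1) 0 j 0 (by omega) (by omega) hj (by omega) heq
    have := hk j
    obtain rfl : j = m - 1 := by omega
    rfl

theorem notMem_block (h : IsOpenChain m n node k) (hj : j + 1 < m) (hi : i ≤ n - 1) :
    node (j + 1) i ∉ block n node j := fun hmem => by
  have ⟨_, _, _, _, hinj, _⟩ := h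
  obtain ⟨j', hj', i', hi', heq⟩ := Set.mem_accumulate.mp hmem
  have := hinj j' i' (j + 1) i (by omega) (h.lt_of_le_pred hi'.2) hj (h.lt_of_le_pred hi) heq
  have := hi'.1
  omega

theorem insert_block_eq_univ (h : IsOpenChain m n node k) :
    insert (node (m - 1) 0) (block n node (m - 1)) = Set.univ := by
  have ⟨hm, _, hk, hjoin, _, hcover⟩ := h
  refine Set.eq_univ_of_forall fun v => ?_
  obtain ⟨j, i, hj, hi, rfl⟩ := hcover v
  rcases i.eq_zero_or_pos with rfl | hi₀
  · rcases Nat.lt_or_ge (j + 1) m with hlt | hge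
    · rw [hjoin j hlt]
      exact .inr (Set.mem_accumulate.mpr
        ⟨j + 1, Nat.le_sub_one_of_lt hlt, k j, ⟨(hk j hlt).1, Nat.le_sub_one_of_lt (hk j hlt).2⟩,
          rfl⟩)
    · obtain rfl : j = m - 1 := by omega
      exact .inl rfl
  · exact .inr (Set.mem_accumulate.mpr
      ⟨j, Nat.le_sub_one_of_lt hj, i, ⟨hi₀, Nat.le_sub_one_of_lt hi⟩, rfl⟩)

end Geometry

section Dynamics

variable {V M : Type} {m n : ℕ} {node : ℕ → ℕ → V} {k : ℕ → ℕ} {w : V → V → ℝ}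
  (h : IsOpenChain m n node k) (hw : ∀ u v, chainAdj m n node u v → 0 ≤ w u v)
  (C : V → Finset M) {j p : ℕ}

/-- The coordination game without bonuses on an open chain of cycles. -/
def game : Game V M where
  adj := chainAdj m n node
  weight := w
  colours := C
  weight_nonneg := hw
  loopless := h.not_chainAdj_self

theorem isPath_first : (h.game hw C).IsPath (node 0) 0 (n - 1) where
  injOn := (h.injOn_node (zero_lt_two.trans_le h.1)).mono Set.Icc_subset_Iic_self
  pred_eq _ hi _ hu := (h.pred_node_succ (zero_lt_two.trans_le h.1) hi.2 hu).resolve_right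
    fun ⟨_, hj, _⟩ => Nat.succ_ne_zero _ hj.symm

theorem attachedPath (hj : j + 1 < m) (hp : k j = p + 1)
    (hexit : node j (n - 1) ∈ block n node j)
    (hsub : (h.game hw C).inClosure (block n node j) ⊆ insert (node j 0) (block n node j))
    (hle : w (node j (n - 1)) (node j 0) ≤ w (node (j + 1) (k j - 1)) (node (j + 1) (k j))) :
    (h.game hw C).AttachedPath (block n node j) (node j (n - 1)) (node (j + 1)) p (n - 1) := by
  have ⟨_, _, hk, hjoin, _, _⟩ := h
  have hp_lt : p < n - 1 := by
    have := (hk j hj).2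
    omega
  have hjunction : node j 0 = node (j + 1) (p + 1) := hp ▸ hjoin j hj
  refine ⟨hp_lt, h.injOn_node hj, fun i hi => h.notMem_block hj hi, hexit, hjunction ▸ hsub,
    fun i hi hip u hu => ?_, h.chainAdj_iff.mpr ⟨j + 1, hj, .inl ⟨p, hp_lt, rfl, rfl⟩⟩,
    fun u hu => ?_, ?_⟩
  · refine (h.pred_node_succ hj hi hu).resolve_right ?_
    rintro ⟨_, hjj, hik, -⟩
    obtain rfl := Nat.succ_injective hjj
    exact hip (Nat.succ_injective (hik.trans hp))
  · refine (h.pred_node_succ hj hp_lt hu).imp_right ?_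
    rintro ⟨_, hjj, -, rfl⟩
    rw [Nat.succ_injective hjj]
  · rwa [hp, Nat.add_sub_cancel, hjunction] at hle

theorem feedbackBlock [Fintype V]
    (hle : ∀ j, j + 1 < m →
      w (node j (n - 1)) (node j 0) ≤ w (node (j + 1) (k j - 1)) (node (j + 1) (k j)))
    (hj : j < m) :
    (h.game hw C).FeedbackBlock (block n node j) (node j 0) (node j (n - 1)) := by
  have ⟨_, hn, hk, hjoin, _, _⟩ := h
  induction j with
  | zero =>
    rw [block, Set.accumulate_zero_nat]
    exact (h.isPath_first hw C).feedbackBlock (by omega)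
  | succ j ih =>
    have hblock := ih (Nat.lt_of_succ_lt hj)
    obtain ⟨p, hp⟩ := Nat.exists_eq_add_one.mpr (hk j hj).1
    rw [block, Set.accumulate_succ]
    refine (h.attachedPath hw C hj hp hblock.exit_mem hblock.inClosure_subset
      (hle j hj)).feedbackBlock ?_
    rwa [← hp, ← hjoin j hj]

end Dynamics

end IsOpenChain

theorem weighted_open_chain_w1_lt_w2_weakly_acyclic_general
    {V : Type} [Fintype V] {M : Type}
    (m n : ℕ) (node : ℕ → ℕ → V) (k : ℕ → ℕ)
    (hchain : IsOpenChain m n node k)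
    (w : V → V → ℝ) (hw : ∀ u v, chainAdj m n node u v → 0 ≤ w u v)
    (hle : ∀ j, j + 1 < m →
      w (node j (n - 1)) (node j 0) ≤
        w (node (j + 1) (k j - 1)) (node (j + 1) (k j)))
    (C : V → Finset M) :
    ∀ s : V → M, Valid C s →
      ∃ L, ImpPath (chainAdj m n node) w (fun _ _ => 0) C s L := by
  intro s hs
  have hblock := hchain.feedbackBlock hw C hle (Nat.sub_one_lt_of_lt hchain.1)
  obtain ⟨s', hreach, hstable⟩ := hblock.exists_reach_insert s fun t _ =>
    Game.follows_of_forall_eq fun _ hu => hchain.pred_last_entry hu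
  rw [hchain.insert_block_eq_univ] at hstable
  exact hreach.exists_impPath (fun v => hstable v (Set.mem_univ v)) hs

/-- A coordination game without bonuses on a weighted open chain of cycles in
which, at every shared node, the weight `w₁ʲ` of the incoming edge from within
the earlier cycle is smaller than the weight `w₂ʲ` of the incoming edge from
within the later cycle, is weakly acyclic. -/
theorem weighted_open_chain_w1_lt_w2_weakly_acyclic
    {V : Type} [Fintype V] {M : Type} [Fintype M]
    (m n : ℕ) (node : ℕ → ℕ → V) (k : ℕ → ℕ)
    (hchain : IsOpenChain m n node k)
    (w : V → V → ℝ) (hw : ∀ u v, chainAdj m n node u v → 0 ≤ w u v)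
    (hlt : ∀ j, j + 1 < m →
      w (node j (n - 1)) (node j 0) <
        w (node (j + 1) (k j - 1)) (node (j + 1) (k j)))
    (C : V → Finset M) (hC : ∀ i, (C i).Nonempty) :
    ∀ s : V → M, Valid C s →
      ∃ L, ImpPath (chainAdj m n node) w (fun _ _ => 0) C s L :=
  weighted_open_chain_w1_lt_w2_weakly_acyclic_general m n node k hchain w hw
    (fun j hj => (hlt j hj).le) C

end CG
end
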